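/- Let R = 𝔽₂[x, y, z]/(x²y − z²), the quotient of the polynomial ring in three variables over the field with two elements by the principal ideal generated by x²y − z². Then for every e ≥ 1 there is NO surjective additive map φ : R → R satisfying φ(r^{2^e}·a) = r·φ(a) for all r, a ∈ R; that is, R is not F-pure (equivalently, not Frobenius split). -/

import Mathlib

/-!
With `q = 2 ^ e`, the relation `z ^ 2 = x ^ 2 * y` gives `z ^ q = x ^ q * y ^ (q / 2)` in `R`.
If `φ` is `2^{-e}`-linear and `φ u = 1`, then
`z = φ (z ^ q * u) = φ (x ^ q * (y ^ (q / 2) * u)) = x * φ (y ^ (q / 2) * u)`,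
so `x` divides `z` in `R`. This is impossible: the ring map from `R` to the dual numbers
`𝔽₂[ε]` with `x, y ↦ 0`, `z ↦ ε` kills `x` but not `z`.
-/

open MvPolynomial

/-- The ring `R = 𝔽₂[x,y,z]/(x²y − z²)`. -/
noncomputable abbrev CuspLikeRing : Type :=
  MvPolynomial (Fin 3) (ZMod 2) ⧸
    Ideal.span {(X 0 : MvPolynomial (Fin 3) (ZMod 2)) ^ 2 * X 1 - X 2 ^ 2}

theorem pow_two_pow_succ_of_sq_eq {A : Type*} [CommRing A] {x y z : A}
    (h : z ^ 2 = x ^ 2 * y) (k : ℕ) :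
    z ^ 2 ^ (k + 1) = x ^ 2 ^ (k + 1) * y ^ 2 ^ k := by
  rw [pow_succ', pow_mul, h, mul_pow, ← pow_mul]

/-- The map `R → 𝔽₂[ε]` with `x, y ↦ 0` and `z ↦ ε`; it respects the relation because
`ε ^ 2 = 0`. -/
noncomputable def toDual : CuspLikeRing →+* DualNumber (ZMod 2) :=
  Ideal.Quotient.lift _
    (aeval (![0, 0, DualNumber.eps] : Fin 3 → DualNumber (ZMod 2))).toRingHom (by
      intro a ha
      rw [Ideal.mem_span_singleton] at ha
      obtain ⟨c, rfl⟩ := ha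
      simp [pow_two])

/-- `R = 𝔽₂[x,y,z]/(x²y − z²)` is not `F`-pure: for every `e ≥ 1` there is no surjective
`p^{-e}`-linear map on `R` (here `p = 2`). -/
theorem F2_xxy_zz_not_F_pure :
    ∀ e : ℕ, 1 ≤ e →
      ¬ ∃ φ : CuspLikeRing → CuspLikeRing,
          Function.Surjective φ ∧
          (∀ a b, φ (a + b) = φ a + φ b) ∧
          (∀ r a, φ (r ^ 2 ^ e * a) = r * φ a) := by
  rintro e he ⟨φ, hsurj, -, hlin⟩
  obtain ⟨k, rfl⟩ : ∃ k, e = k + 1 := ⟨e - 1, by omega⟩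
  let x : CuspLikeRing := Ideal.Quotient.mk _ (X 0)
  let y : CuspLikeRing := Ideal.Quotient.mk _ (X 1)
  let z : CuspLikeRing := Ideal.Quotient.mk _ (X 2)
  have hrel : z ^ 2 = x ^ 2 * y := by
    refine (Ideal.Quotient.eq.2 ?_).symm
    exact Ideal.subset_span rfl
  have hpow : z ^ 2 ^ (k + 1) = x ^ 2 ^ (k + 1) * y ^ 2 ^ k :=
    pow_two_pow_succ_of_sq_eq hrel k
  obtain ⟨u, hu⟩ := hsurj 1
  have hz : z = x * φ (y ^ 2 ^ k * u) := by
    rw [← hlin, ← mul_assoc, ← hpow, hlin, hu, mul_one]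
  have hx0 : toDual x = 0 := by
    simp [toDual, x]
  have hzε : toDual z = DualNumber.eps := by
    simp [toDual, z]
  have h := congrArg toDual hz
  rw [map_mul, hx0, zero_mul, hzε] at h
  simpa using congrArg TrivSqZeroExt.snd h
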